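/- arXiv:1512.04969 — 2 statements merged into one kernel-verified Lean document; each statement's English description precedes it below -/
import Mathlib

section
/- Let F be an algebraically closed field and let (a_n)_{n≥2} be any sequence of non-negative integers. Then there exists a finitely generated (affine) unital associative F-algebra B such that for every integer n ≥ 2, the number of isomorphism classes of simple left B-modules of F-dimension exactly n equals a_n; that is, there exist a_n pairwise non-isomorphic simple B-modules of F-dimension n, and every simple B-module of F-dimension n is isomorphic to one of them. -/
universe u

/-- A bundled simple left `B`-module whose underlying `F`-vector space (with scalar action
induced from `F → B`, expressed by the `IsScalarTower` field) has dimension `n`. -/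
structure SimpleModOfDim (F B : Type*) [Field F] [Ring B] [Algebra F B] (n : ℕ) where
  carrier : Type
  [isAddCommGroup : AddCommGroup carrier]
  [isModuleF : Module F carrier]
  [isModuleB : Module B carrier]
  [isTower : IsScalarTower F B carrier]
  isSimple : IsSimpleModule B carrier
  dim_eq : Module.finrank F carrier = n

attribute [instance] SimpleModOfDim.isAddCommGroup SimpleModOfDim.isModuleF
  SimpleModOfDim.isModuleB SimpleModOfDim.isTower

/-- A finitely generated (affine) unital associative `F`-algebra `B` such that, for every
`n ≥ 2`, there are exactly `a n` isomorphism classes of simple left `B`-modules of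
`F`-dimension `n`: there is a family of `a n` pairwise non-isomorphic simple modules of
`F`-dimension `n`, and every simple `B`-module of `F`-dimension `n` is isomorphic to a
member of the family. -/
structure AffineAlgWithPrescribedSimples (F : Type) [Field F] (a : ℕ → ℕ) where
  B : Type
  [ringB : Ring B]
  [algB : Algebra F B]
  finType : Algebra.FiniteType F B
  counting : ∀ n : ℕ, 2 ≤ n →
    ∃ M : Fin (a n) → SimpleModOfDim F B n,
      (∀ i j : Fin (a n), i ≠ j → IsEmpty ((M i).carrier ≃ₗ[B] (M j).carrier)) ∧
      (∀ (N : Type u) [AddCommGroup N] [Module F N] [Module B N] [IsScalarTower F B N],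
        IsSimpleModule B N → Module.finrank F N = n →
        ∃ i : Fin (a n), Nonempty (N ≃ₗ[B] (M i).carrier))

/-!
Let `u` be the lower shift of a full matrix algebra of size `n` and `v` its transpose. Then
`(1 - v * u) * u ^ m * (1 - u * v)` is the bottom-left matrix unit if `n = m + 1` and vanishes
otherwise. Take a product of matrix algebras, finitely many of each size, and in it the algebra `B`
generated by `u`, `v` and a central element acting on each factor by a scalar, distinct scalars for
distinct factors of the same size. Lagrange interpolation in the central element splits each of the
elements above into matrix units of `B` supported on a single factor.

Let `N` be a finite-dimensional simple `B`-module. If one of these matrix units acts nontrivially on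
`N`, then `N` is the natural module of the corresponding factor. Otherwise
`(1 - v * u) * f(u) * (1 - u * v)` acts as zero for all polynomials `f`; as `u` is algebraic on `N`
and `u * v * u = u`, this forces `u * v = 1` on `N`. Then `B` acts through commuting operators, and
`N` is one-dimensional because the base field is algebraically closed.
-/

open Polynomial

section SimpleModule

theorem nonempty_linearEquiv_of_smul_eq_zero {R M N : Type*} [Ring R] [AddCommGroup M]
    [AddCommGroup N] [Module R M] [Module R N] [IsSimpleModule R M] [IsSimpleModule R N]
    {x : M} {y : N} (hx : x ≠ 0) (hy : y ≠ 0) (h : ∀ r : R, r • x = 0 → r • y = 0) :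
    Nonempty (M ≃ₗ[R] N) := by
  let f := LinearMap.toSpanSingleton R M x
  let g := LinearMap.toSpanSingleton R N y
  have hker : LinearMap.ker f = LinearMap.ker g :=
    (IsSimpleModule.ker_toSpanSingleton_isMaximal R hx).eq_of_le
      (IsSimpleModule.ker_toSpanSingleton_isMaximal R hy).ne_top h
  exact ⟨(f.quotKerEquivOfSurjective (IsSimpleModule.toSpanSingleton_surjective R hx)).symm ≪≫ₗ
    Submodule.quotEquivOfEq _ _ hker ≪≫ₗ
    g.quotKerEquivOfSurjective (IsSimpleModule.toSpanSingleton_surjective R hy)⟩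

theorem isSimpleModule_iff_of_surjective {R S M : Type*} [Ring R] [Ring S] [AddCommGroup M]
    [Module R M] [Module S M] {φ : R →+* S} (hφ : Function.Surjective φ)
    (h : ∀ (r : R) (x : M), r • x = φ r • x) : IsSimpleModule R M ↔ IsSimpleModule S M :=
  haveI : RingHomSurjective φ := ⟨hφ⟩
  let id' : M →ₛₗ[φ] M := { AddMonoidHom.id M with map_smul' := h }
  id'.isSimpleModule_iff_of_bijective Function.bijective_id

theorem finrank_eq_one_of_commute_of_adjoin_eq_top {F B : Type*} (N : Type*) [Field F]
    [IsAlgClosed F] [Ring B] [Algebra F B] [AddCommGroup N] [Module F N] [Module B N]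
    [IsScalarTower F B N] [FiniteDimensional F N] [IsSimpleModule B N] {s : Set B}
    (hs : Algebra.adjoin F s = ⊤)
    (hcomm : ∀ x ∈ s, ∀ y ∈ s, Commute (Algebra.lsmul F F N x) (Algebra.lsmul F F N y)) :
    Module.finrank F N = 1 := by
  let ρ : B →ₐ[F] Module.End F N := Algebra.lsmul F F N
  have hρ : ρ.range = Algebra.adjoin F (ρ '' s) := by
    rw [← AlgHom.map_adjoin, hs, Algebra.map_top]
  have : IsMulCommutative ρ.range :=
    hρ ▸ Algebra.isMulCommutative_adjoin F (Set.forall_mem_image.2 fun x hx =>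
      Set.forall_mem_image.2 (hcomm x hx))
  have : IsSimpleModule ρ.range N :=
    (isSimpleModule_iff_of_surjective (φ := (ρ.rangeRestrict : B →+* ρ.range))
      ρ.rangeRestrict_surjective fun _ _ => rfl).1 ‹_›
  exact IsSimpleModule.finrank_eq_one_of_isMulCommutative ρ.range N F

end SimpleModule

section Corner

/-- The element `(1 - v * u) * u ^ m * (1 - u * v)`, a bottom-left corner: when `u` is the lower
shift of a matrix algebra and `v` its transpose, the outer factors are the last and the first
diagonal matrix units, so that this is the `(last, first)` entry of `u ^ m`. -/
def corner {A : Type*} [Ring A] (u v : A) (m : ℕ) : A := (1 - v * u) * u ^ m * (1 - u * v)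

theorem map_corner {A C : Type*} [Ring A] [Ring C] (φ : A →+* C) (u v : A) (m : ℕ) :
    φ (corner u v m) = corner (φ u) (φ v) m := by
  simp [corner]

variable {F A : Type*} [Ring A] {u v : A}

theorem mul_aeval_mul_eq_zero_of_corner_eq_zero [CommRing F] [Algebra F A]
    (h : ∀ m, corner u v m = 0) (f : F[X]) :
    (1 - v * u) * aeval u f * (1 - u * v) = 0 := by
  induction f using Polynomial.induction_on' with
  | add f g hf hg => rw [map_add, mul_add, add_mul, hf, hg, add_zero]
  | monomial m c =>
    rw [aeval_monomial, ← Algebra.smul_def, mul_smul_comm, smul_mul_assoc]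
    exact (congrArg (c • ·) (h m)).trans (smul_zero c)

theorem aeval_mul_eq_zero_of_aeval_X_pow_mul [CommRing F] [Algebra F A]
    (h : ∀ m, corner u v m = 0) {f : F[X]} {k : ℕ}
    (hf : aeval u (X ^ k * f) * (1 - u * v) = 0) : aeval u f * (1 - u * v) = 0 := by
  induction k with
  | zero => simpa using hf
  | succ k ih =>
    refine ih ?_
    rw [pow_succ', mul_assoc, map_mul, aeval_X] at hf
    generalize X ^ k * f = g at hf ⊢
    calc aeval u g * (1 - u * v)
        = (1 - v * u) * aeval u g * (1 - u * v) + v * (u * aeval u g * (1 - u * v)) := by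
          noncomm_ring
      _ = 0 := by rw [mul_aeval_mul_eq_zero_of_corner_eq_zero h, hf, mul_zero, add_zero]

theorem mul_eq_one_of_corner_eq_zero [Field F] [Algebra F A] (hu : IsAlgebraic F u)
    (huvu : u * v * u = u) (h : ∀ m, corner u v m = 0) : u * v = 1 := by
  obtain ⟨f, hf0, hf⟩ := hu
  obtain ⟨g, hfg, hg⟩ := f.exists_eq_pow_rootMultiplicity_mul_and_not_dvd hf0 0
  rw [C_0, sub_zero] at hfg hg
  have hgQ : aeval u g * (1 - u * v) = 0 :=
    aeval_mul_eq_zero_of_aeval_X_pow_mul h (by rw [← hfg, hf, zero_mul])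
  have hQu : (1 - u * v) * u = 0 := by rw [sub_mul, one_mul, huvu, sub_self]
  have hQg : (1 - u * v) * aeval u g = g.coeff 0 • (1 - u * v) := by
    conv_lhs => rw [← X_mul_divX_add g]
    rw [map_add, map_mul, aeval_X, aeval_C, mul_add, ← mul_assoc, hQu, zero_mul, zero_add,
      ← Algebra.commutes, Algebra.smul_def]
  have hQQ : g.coeff 0 • (1 - u * v) = 0 :=
    calc g.coeff 0 • (1 - u * v)
        = g.coeff 0 • ((1 - u * v) - (1 - u * v) * u * v) := by rw [hQu, zero_mul, sub_zero]
      _ = (1 - u * v) * aeval u g * (1 - u * v) := by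
          rw [hQg, smul_mul_assoc, mul_sub, mul_one, mul_assoc]
      _ = 0 := by rw [mul_assoc, hgQ, mul_zero]
  exact (sub_eq_zero.1 ((smul_eq_zero.1 hQQ).resolve_left (mt X_dvd_iff.2 hg))).symm

end Corner

section LowerShift

open Matrix

/-- The lower shift matrix `e i ↦ e (i + 1)`, of size `n + 1` so that its rows have a first and a
last index. -/
def lowerShift (R : Type*) [Zero R] [One R] (n : ℕ) : Matrix (Fin (n + 1)) (Fin (n + 1)) R :=
  .of fun i j => if (i : ℕ) = j + 1 then 1 else 0

variable {R : Type*} {n : ℕ}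

section Semiring

variable [Semiring R]

theorem lowerShift_mul_apply_zero (A : Matrix (Fin (n + 1)) (Fin (n + 1)) R) (j : Fin (n + 1)) :
    (lowerShift R n * A) 0 j = 0 := by
  simp [mul_apply, lowerShift]

theorem lowerShift_mul_apply_succ (A : Matrix (Fin (n + 1)) (Fin (n + 1)) R) (i : Fin n)
    (j : Fin (n + 1)) : (lowerShift R n * A) i.succ j = A i.castSucc j := by
  rw [mul_apply, Fintype.sum_eq_single i.castSucc]
  · simp [lowerShift]
  · intro k hk
    have : (i : ℕ) ≠ k := fun h => hk (Fin.ext h.symm)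
    simp [lowerShift, this]

theorem transpose_lowerShift_mul_apply_castSucc (A : Matrix (Fin (n + 1)) (Fin (n + 1)) R)
    (i : Fin n) (j : Fin (n + 1)) : ((lowerShift R n)ᵀ * A) i.castSucc j = A i.succ j := by
  rw [mul_apply, Fintype.sum_eq_single i.succ]
  · simp [lowerShift]
  · intro k hk
    have : (k : ℕ) ≠ i + 1 := fun h => hk (Fin.ext h)
    simp [lowerShift, this]

theorem transpose_lowerShift_mul_apply_last (A : Matrix (Fin (n + 1)) (Fin (n + 1)) R)
    (j : Fin (n + 1)) : ((lowerShift R n)ᵀ * A) (Fin.last n) j = 0 := by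
  refine (mul_apply ..).trans (Finset.sum_eq_zero fun k _ => ?_)
  simp [lowerShift, k.isLt.ne]

theorem lowerShift_pow_apply (k : ℕ) (i j : Fin (n + 1)) :
    (lowerShift R n ^ k) i j = if (i : ℕ) = j + k then 1 else 0 := by
  induction k generalizing i with
  | zero => simp [one_apply, Fin.ext_iff]
  | succ k ih =>
    rw [pow_succ']
    cases i using Fin.cases with
    | zero => simp [lowerShift_mul_apply_zero]
    | succ i => simp [lowerShift_mul_apply_succ, ih, ← add_assoc]

end Semiring

section Ring

variable [Ring R]

theorem one_sub_lowerShift_mul_transpose :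
    1 - lowerShift R n * (lowerShift R n)ᵀ = single 0 0 1 := by
  ext i j
  cases i using Fin.cases with
  | zero => simp [lowerShift_mul_apply_zero, one_apply, single_apply]
  | succ i =>
    rw [Matrix.sub_apply, lowerShift_mul_apply_succ,
      single_apply_of_row_ne (Fin.succ_ne_zero i).symm, sub_eq_zero]
    simp [lowerShift, one_apply, Fin.ext_iff, eq_comm]

theorem one_sub_transpose_mul_lowerShift :
    1 - (lowerShift R n)ᵀ * lowerShift R n = single (Fin.last n) (Fin.last n) 1 := by
  ext i j
  cases i using Fin.lastCases with
  | last => simp [transpose_lowerShift_mul_apply_last, one_apply, single_apply]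
  | cast i =>
    rw [Matrix.sub_apply, transpose_lowerShift_mul_apply_castSucc,
      single_apply_of_row_ne (Fin.castSucc_lt_last i).ne', sub_eq_zero]
    simp [lowerShift, one_apply, Fin.ext_iff]

theorem lowerShift_mul_transpose_mul_lowerShift :
    lowerShift R n * (lowerShift R n)ᵀ * lowerShift R n = lowerShift R n := by
  have hrow : single (0 : Fin (n + 1)) 0 1 * lowerShift R n = 0 := by
    ext i j
    rcases eq_or_ne i 0 with rfl | hi
    · simp [lowerShift]
    · rw [single_mul_apply_of_ne _ _ _ _ _ hi, Matrix.zero_apply]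
  rwa [← one_sub_lowerShift_mul_transpose, sub_mul, one_mul, sub_eq_zero, eq_comm] at hrow

theorem corner_lowerShift (m : ℕ) :
    corner (lowerShift R n) (lowerShift R n)ᵀ m =
      single (Fin.last n) 0 (if n = m then 1 else 0) := by
  rw [corner, one_sub_transpose_mul_lowerShift, one_sub_lowerShift_mul_transpose,
    single_mul_mul_single, lowerShift_pow_apply]
  simp

end Ring

section CommRing

variable [CommRing R]

theorem lowerShift_pow_mul_single_mul_transpose_pow (i j : Fin (n + 1)) :
    lowerShift R n ^ (i : ℕ) * single 0 0 1 * (lowerShift R n)ᵀ ^ (j : ℕ) = single i j 1 := by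
  have hcol (k : Fin (n + 1)) : lowerShift R n ^ (k : ℕ) *ᵥ Pi.single 0 1 = Pi.single k 1 := by
    ext l
    simp [lowerShift_pow_apply, Pi.single_apply, Fin.ext_iff]
  rw [single_eq_single_vecMulVec_single, mul_vecMulVec, vecMulVec_mul, ← transpose_pow,
    vecMul_transpose, hcol, hcol, ← single_eq_single_vecMulVec_single]

theorem adjoin_lowerShift_transpose_eq_top :
    Algebra.adjoin R {lowerShift R n, (lowerShift R n)ᵀ} = ⊤ := by
  set S := Algebra.adjoin R {lowerShift R n, (lowerShift R n)ᵀ}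
  have hu : lowerShift R n ∈ S := Algebra.subset_adjoin (by simp)
  have hv : (lowerShift R n)ᵀ ∈ S := Algebra.subset_adjoin (by simp)
  have hsingle (i j : Fin (n + 1)) : single i j 1 ∈ S := by
    rw [← lowerShift_pow_mul_single_mul_transpose_pow, ← one_sub_lowerShift_mul_transpose]
    exact mul_mem (mul_mem (pow_mem hu _) (sub_mem (one_mem S) (mul_mem hu hv))) (pow_mem hv _)
  refine Algebra.eq_top_iff.2 fun A => ?_
  rw [matrix_eq_sum_single A]
  refine sum_mem fun i _ => sum_mem fun j _ => ?_
  simpa using S.smul_mem (hsingle i j) (A i j)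

end CommRing

end LowerShift

section BlockAlgebra

open Matrix

section CommRing

variable {F ι : Type*} [CommRing F] (d : ι → ℕ) (c : ι → F)

/-- The subalgebra of `∏ p, Mat_(d p + 1)(F)` generated by the families of lower shifts, of their
transposes and of the scalar matrices `c p`. The sizes are indexed as `d p + 1` to exclude empty
blocks; the label `c p` serves to tell blocks of the same size apart. -/
def blockAlgebra : Subalgebra F (∀ p, Matrix (Fin (d p + 1)) (Fin (d p + 1)) F) :=
  Algebra.adjoin F {fun p => lowerShift F (d p), fun p => (lowerShift F (d p))ᵀ,
    fun p => algebraMap F _ (c p)}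

namespace blockAlgebra

/-- The generator of `blockAlgebra d c` that is the lower shift in each block. -/
def shift : blockAlgebra d c := ⟨fun p => lowerShift F (d p), Algebra.subset_adjoin (by simp)⟩

/-- The generator of `blockAlgebra d c` that is the transposed lower shift in each block. -/
def coshift : blockAlgebra d c :=
  ⟨fun p => (lowerShift F (d p))ᵀ, Algebra.subset_adjoin (by simp)⟩

/-- The central generator of `blockAlgebra d c`, equal to the scalar `c p` in block `p`. -/
def label : blockAlgebra d c := ⟨fun p => algebraMap F _ (c p), Algebra.subset_adjoin (by simp)⟩

theorem adjoin_eq_top : Algebra.adjoin F {shift d c, coshift d c, label d c} = ⊤ := by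
  apply Subalgebra.map_injective (f := (blockAlgebra d c).val) Subtype.val_injective
  rw [AlgHom.map_adjoin, Algebra.map_top, Subalgebra.range_val]
  simp only [Set.image_insert_eq, Set.image_singleton]
  rfl

theorem finiteType : Algebra.FiniteType F (blockAlgebra d c) := by
  classical
  exact ⟨⟨{shift d c, coshift d c, label d c}, by simpa using adjoin_eq_top d c⟩⟩

/-- The projection of `blockAlgebra d c` onto block `p`. -/
def proj (p : ι) : blockAlgebra d c →ₐ[F] Matrix (Fin (d p + 1)) (Fin (d p + 1)) F :=
  (Pi.evalAlgHom F _ p).comp (blockAlgebra d c).val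

variable {d c}

theorem ext_proj {x y : blockAlgebra d c} (h : ∀ p, proj d c p x = proj d c p y) : x = y :=
  Subtype.ext (funext h)

theorem proj_shift (p : ι) : proj d c p (shift d c) = lowerShift F (d p) := rfl

theorem proj_coshift (p : ι) : proj d c p (coshift d c) = (lowerShift F (d p))ᵀ := rfl

theorem proj_label (p : ι) : proj d c p (label d c) = algebraMap F _ (c p) := rfl

theorem proj_surjective (p : ι) : Function.Surjective (proj d c p) := by
  rw [← AlgHom.range_eq_top, eq_top_iff, ← adjoin_lowerShift_transpose_eq_top,
    Algebra.adjoin_le_iff]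
  rintro _ (rfl | rfl)
  exacts [⟨_, proj_shift p⟩, ⟨_, proj_coshift p⟩]

theorem commute_label (b : blockAlgebra d c) : Commute (label d c) b :=
  ext_proj fun p => by rw [map_mul, map_mul, proj_label, Algebra.commutes]

theorem shift_mul_coshift_mul_shift : shift d c * coshift d c * shift d c = shift d c :=
  ext_proj fun p => by
    simp only [map_mul, proj_shift, proj_coshift, lowerShift_mul_transpose_mul_lowerShift]

theorem proj_corner (m : ℕ) (p : ι) :
    proj d c p (corner (shift d c) (coshift d c) m) =
      single (Fin.last (d p)) 0 (if d p = m then 1 else 0) := by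
  rw [← corner_lowerShift]
  exact map_corner (proj d c p).toRingHom _ _ m

end blockAlgebra

end CommRing

variable {F ι : Type*} [Field F] {d : ι → ℕ} {c : ι → F}

namespace blockAlgebra

section CornerUnit

variable [DecidableEq ι] (hd : ∀ m, (d ⁻¹' {m}).Finite)

/-- The bottom-left matrix unit of block `p`: a corner detects the size of a block, and the Lagrange
basis polynomial, evaluated at the label, selects `p` among the finitely many blocks of its size. -/
noncomputable def cornerUnit (c : ι → F) (p : ι) : blockAlgebra d c :=
  aeval (label d c) (Lagrange.basis (hd (d p)).toFinset c p) *
    corner (shift d c) (coshift d c) (d p)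

variable {hd}

theorem proj_cornerUnit (p q : ι) :
    proj d c q (cornerUnit hd c p) = single (Fin.last (d q)) 0
      (if d q = d p then (Lagrange.basis (hd (d p)).toFinset c p).eval (c q) else 0) := by
  rw [cornerUnit, map_mul, proj_corner, ← aeval_algHom_apply, proj_label, aeval_algebraMap_apply,
    coe_aeval_eq_eval, ← Algebra.smul_def, smul_single, smul_ite, smul_eq_mul, mul_one, smul_zero]

theorem proj_cornerUnit_of_ne {p q : ι} (h : p ≠ q) : proj d c q (cornerUnit hd c p) = 0 := by
  rw [proj_cornerUnit]
  split_ifs with hdq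
  · rw [Lagrange.eval_basis_of_ne h (by simpa using hdq), single_zero]
  · exact single_zero ..

theorem proj_cornerUnit_self (hc : Function.Injective fun p => (d p, c p)) (p : ι) :
    proj d c p (cornerUnit hd c p) = single (Fin.last (d p)) 0 1 := by
  have hinj : Set.InjOn c (hd (d p)).toFinset := fun q hq r hr h => by
    rw [Set.Finite.coe_toFinset, Set.mem_preimage, Set.mem_singleton_iff] at hq hr
    exact hc (Prod.ext (hq.trans hr.symm) h)
  rw [proj_cornerUnit, if_pos rfl, Lagrange.eval_basis_self hinj (by simp)]

theorem corner_eq_sum_cornerUnit (hc : Function.Injective fun p => (d p, c p)) (m : ℕ) :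
    corner (shift d c) (coshift d c) m = ∑ p ∈ (hd m).toFinset, cornerUnit hd c p := by
  refine ext_proj fun q => ?_
  rw [map_sum, proj_corner]
  split_ifs with h
  · rw [Finset.sum_eq_single_of_mem q (by simpa using h) fun p _ hp => proj_cornerUnit_of_ne hp,
      proj_cornerUnit_self hc]
  · rw [single_zero, Finset.sum_eq_zero]
    exact fun p hp => proj_cornerUnit_of_ne fun hpq => h (by simpa [hpq] using hp)

end CornerUnit

end blockAlgebra

open blockAlgebra

/-- The natural module `F ^ (d p + 1)` of block `p`, on which `blockAlgebra d c` acts through that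
block. It is a type synonym because the action depends on `p` and not only on `d p`. -/
def BlockModule (F : Type*) {ι : Type*} (d : ι → ℕ) (p : ι) : Type _ := Fin (d p + 1) → F

namespace BlockModule

section Action

variable (d c) (p : ι)

instance : AddCommGroup (BlockModule F d p) := inferInstanceAs (AddCommGroup (Fin (d p + 1) → F))

instance : Module F (BlockModule F d p) := inferInstanceAs (Module F (Fin (d p + 1) → F))

instance : Nontrivial (BlockModule F d p) := inferInstanceAs (Nontrivial (Fin (d p + 1) → F))

theorem finrank_eq : Module.finrank F (BlockModule F d p) = d p + 1 := Module.finrank_fin_fun F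

/-- The representation of `blockAlgebra d c` on the natural module of block `p`. -/
def action : blockAlgebra d c →ₐ[F] Module.End F (BlockModule F d p) :=
  (toLinAlgEquiv' : _ ≃ₐ[F] Module.End F (Fin (d p + 1) → F)).toAlgHom.comp (proj d c p)

theorem action_surjective : Function.Surjective (action d c p) :=
  (toLinAlgEquiv' : _ ≃ₐ[F] Module.End F (Fin (d p + 1) → F)).surjective.comp (proj_surjective p)

end Action

variable {p : ι}

instance : Module (blockAlgebra d c) (BlockModule F d p) :=
  Module.compHom (BlockModule F d p) (action d c p).toRingHom

instance : IsScalarTower F (blockAlgebra d c) (BlockModule F d p) where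
  smul_assoc r b := LinearMap.congr_fun (map_smul (action d c p) r b)

instance : IsSimpleModule (blockAlgebra d c) (BlockModule F d p) :=
  (isSimpleModule_iff_of_surjective (φ := (action d c p).toRingHom) (action_surjective d c p)
    fun _ _ => rfl).2 inferInstance

theorem label_smul (w : BlockModule F d p) : label d c • w = c p • w :=
  LinearMap.congr_fun
    ((toLinAlgEquiv' : _ ≃ₐ[F] Module.End F (Fin (d p + 1) → F)).commutes (c p)) w

theorem eq_of_equiv (hc : Function.Injective fun p => (d p, c p)) {p q : ι}
    (e : BlockModule F d p ≃ₗ[blockAlgebra d c] BlockModule F d q) : p = q := by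
  have hd : d p = d q := by
    simpa only [finrank_eq, add_left_inj] using (e.restrictScalars F).finrank_eq
  obtain ⟨w, hw⟩ := exists_ne (0 : BlockModule F d p)
  have h : c p • e w = c q • e w :=
    calc c p • e w = e (c p • w) := ((e.restrictScalars F).map_smul (c p) w).symm
      _ = e (label d c • w) := by rw [label_smul]
      _ = c q • e w := by rw [e.map_smul, label_smul]
  exact hc (Prod.ext hd (smul_left_injective F (e.map_ne_zero_iff.2 hw) h))

theorem nonempty_equiv_of_cornerUnit_smul_ne_zero [DecidableEq ι]
    (hc : Function.Injective fun p => (d p, c p)) {hd : ∀ m, (d ⁻¹' {m}).Finite}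
    {N : Type*} [AddCommGroup N] [Module (blockAlgebra d c) N]
    [IsSimpleModule (blockAlgebra d c) N] {x : N} (hx : cornerUnit hd c p • x ≠ 0) :
    Nonempty (BlockModule F d p ≃ₗ[blockAlgebra d c] N) := by
  let e : BlockModule F d p := (Pi.single (Fin.last (d p)) 1 : Fin (d p + 1) → F)
  have he : e ≠ 0 := Pi.single_ne_zero_iff.2 one_ne_zero
  refine nonempty_linearEquiv_of_smul_eq_zero he hx fun b hb => ?_
  have hproj : proj d c p b * single (Fin.last (d p)) 0 1 = 0 := by
    rw [single_eq_single_vecMulVec_single, mul_vecMulVec,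
      show proj d c p b *ᵥ Pi.single (Fin.last (d p)) 1 = 0 from hb, zero_vecMulVec]
  have : b * cornerUnit hd c p = 0 := ext_proj fun q => by
    rw [map_mul, map_zero]
    rcases eq_or_ne p q with rfl | h
    · rw [proj_cornerUnit_self hc, hproj]
    · rw [proj_cornerUnit_of_ne h, mul_zero]
  rw [← mul_smul, this, zero_smul]

end BlockModule

namespace blockAlgebra

variable {N : Type*} [AddCommGroup N] [Module F N]
  [Module (blockAlgebra d c) N] [IsScalarTower F (blockAlgebra d c) N]
  [IsSimpleModule (blockAlgebra d c) N] [FiniteDimensional F N] [IsAlgClosed F]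

theorem finrank_eq_one_of_corner_smul_eq_zero
    (h : ∀ (m : ℕ) (x : N), corner (shift d c) (coshift d c) m • x = 0) :
    Module.finrank F N = 1 := by
  let ρ : blockAlgebra d c →ₐ[F] Module.End F N := Algebra.lsmul F F N
  have huv : ρ (shift d c) * ρ (coshift d c) = 1 :=
    mul_eq_one_of_corner_eq_zero (F := F) (Algebra.IsAlgebraic.isAlgebraic _)
      (by rw [← map_mul, ← map_mul, shift_mul_coshift_mul_shift])
      fun m => (map_corner ρ.toRingHom _ _ m).symm.trans (LinearMap.ext (h m))
  have huv_comm : Commute (ρ (shift d c)) (ρ (coshift d c)) :=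
    huv.trans (mul_eq_one_comm.1 huv).symm
  have hlabel (b : blockAlgebra d c) : Commute (ρ (label d c)) (ρ b) := (commute_label b).map ρ
  refine finrank_eq_one_of_commute_of_adjoin_eq_top N (adjoin_eq_top d c) ?_
  rintro _ (rfl | rfl | rfl) _ (rfl | rfl | rfl)
  exacts [.refl _, huv_comm, (hlabel _).symm, huv_comm.symm, .refl _, (hlabel _).symm, hlabel _,
    hlabel _, .refl _]

theorem exists_equiv_blockModule (hd : ∀ m, (d ⁻¹' {m}).Finite)
    (hc : Function.Injective fun p => (d p, c p)) (hN : Module.finrank F N ≠ 1) :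
    ∃ p, Nonempty (BlockModule F d p ≃ₗ[blockAlgebra d c] N) := by
  classical
  contrapose! hN
  refine finrank_eq_one_of_corner_smul_eq_zero (d := d) (c := c) fun m x => ?_
  rw [corner_eq_sum_cornerUnit (hd := hd) hc, Finset.sum_smul]
  refine Finset.sum_eq_zero fun p _ => ?_
  by_contra hx
  exact (BlockModule.nonempty_equiv_of_cornerUnit_smul_ne_zero hc hx).elim (hN p).elim

end blockAlgebra

end BlockAlgebra

/-- **Main theorem.** Over an algebraically closed field `F`, for any sequence
`(a_n)_{n ≥ 2}` of non-negative integers there exists an affine `F`-algebra having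
precisely `a n` non-isomorphic simple modules of `F`-dimension `n` for every `n ≥ 2`. -/
theorem stmt_0 (F : Type) [Field F] [IsAlgClosed F] (a : ℕ → ℕ) :
    Nonempty (AffineAlgWithPrescribedSimples.{u} F a) := by
  have : Infinite F := IsAlgClosed.instInfinite
  let d : (Σ m, Fin (a (m + 1))) → ℕ := Sigma.fst
  let c : (Σ m, Fin (a (m + 1))) → F := fun p => Infinite.natEmbedding F p.2
  have hd (m : ℕ) : (d ⁻¹' {m}).Finite :=
    (Set.finite_range (Sigma.mk m)).subset fun ⟨_, i⟩ h => by cases h; exact ⟨i, rfl⟩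
  have hc : Function.Injective fun p => (d p, c p) := by
    rintro ⟨m, i⟩ ⟨_, j⟩ h
    obtain ⟨rfl : m = _, h⟩ := Prod.mk.inj h
    exact congrArg _ (Fin.ext ((Infinite.natEmbedding F).injective h))
  refine ⟨blockAlgebra d c, blockAlgebra.finiteType d c, fun n hn => ?_⟩
  obtain ⟨m, rfl⟩ := Nat.exists_eq_add_one_of_ne_zero (by omega : n ≠ 0)
  refine ⟨fun i => ⟨BlockModule F d ⟨m, i⟩, inferInstance, BlockModule.finrank_eq d _⟩,
    fun i j hij => ⟨fun e => hij ?_⟩, ?_⟩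
  · exact sigma_mk_injective (β := fun m => Fin (a (m + 1))) (BlockModule.eq_of_equiv hc e)
  intro N _ _ _ _ _ hN
  have : FiniteDimensional F N := Module.finite_of_finrank_pos (by omega)
  obtain ⟨⟨k, i⟩, ⟨e⟩⟩ := blockAlgebra.exists_equiv_blockModule hd hc (N := N) (by omega)
  obtain rfl : k = m := Nat.succ_injective <|
    (BlockModule.finrank_eq d _).symm.trans ((e.restrictScalars F).finrank_eq.trans hN)
  exact ⟨i, ⟨e.symm⟩⟩
end

section
/- With the construction below, for every integer n ≥ 2 with n ∉ S (i.e., a_n = 0), the algebra B has no simple left B-module of F-dimension n. -/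
open Matrix

/-- The `n×n` cyclic permutation matrix: identity block `I_{n-1}` in the upper right and
a `1` in the lower-left corner. -/
def cycMat (F : Type*) [Semiring F] (n : ℕ) : Matrix (Fin n) (Fin n) F :=
  Matrix.of fun k l => if (l : ℕ) = ((k : ℕ) + 1) % n then 1 else 0

/-- The matrix unit `E₁₁`, with `1` in the upper-left entry and zeros elsewhere. -/
def e11 (F : Type*) [Semiring F] (n : ℕ) : Matrix (Fin n) (Fin n) F :=
  Matrix.of fun k l => if (k : ℕ) = 0 ∧ (l : ℕ) = 0 then 1 else 0

/-- Index set: pairs `(n, i)` with `n ≥ 2` and `1 ≤ i ≤ a n` (here `0`-indexed: `i < a n`).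
Note that `n` lies in the support `S` of `a` automatically, since `i < a n` forces `a n ≠ 0`. -/
abbrev Idx (a : ℕ → ℕ) : Type := {p : ℕ × ℕ // 2 ≤ p.1 ∧ p.2 < a p.1}

/-- The ambient algebra `A = ∏_{n ∈ S} ∏_{i=1}^{a n} M_n(F)`. -/
abbrev ConstrA (F : Type*) [Field F] (a : ℕ → ℕ) : Type _ :=
  ∀ p : Idx a, Matrix (Fin p.1.1) (Fin p.1.1) F

/-- The element `e` whose `(n,i)` component is `λ_{n,i} • E₁₁`. -/
def elemE {F : Type*} [Field F] (a : ℕ → ℕ) (lam : Idx a → F) : ConstrA F a :=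
  fun p => lam p • e11 F p.1.1

/-- The element `σ` whose `(n,i)` component is the cyclic permutation matrix `P_n`. -/
def elemS (F : Type*) [Field F] (a : ℕ → ℕ) : ConstrA F a :=
  fun p => cycMat F p.1.1
/-- `B = F⟨e, σ⟩`, the unital `F`-subalgebra of `A` generated by `e` and `σ`. -/
abbrev ConstrB (F : Type*) [Field F] (a : ℕ → ℕ) (lam : Idx a → F) :
    Subalgebra F (ConstrA F a) :=
  Algebra.adjoin F {elemE a lam, elemS F a}

universe u

/-!
The generators satisfy `e sᵏ e sʲ e = e sᵍ e e` with `g = gcd(k, j)`, so on a simple module `N` the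
operators `e sᵏ` commute on the image of `e` and share an eigenvector `v` there. Their eigenvalues
satisfy `χ k * χ j = χ (gcd(k, j)) * χ 0`, which forces `χ` to be a nonzero constant `μ` on the
multiples of some `m` and zero elsewhere. The orbit of `v` under `s` then spans `N`, so that
`m = dim N` as soon as `dim N ≥ 2`.

Consequently `e sⁿ e - e sᵈ e` acts on `v` by `μ²` if `n = dim N` and `0 < d < n`, whereas in a
matrix block of size `r ≠ n` one of these elements vanishes: `d = r` if `r ∣ n`, and `d = 1`
otherwise. So if no block had size `n`, their product would be zero.
-/

section Generators

variable {F B N : Type*} [CommSemiring F]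

theorem smul_mem_of_adjoin_eq_top [Semiring B] [Algebra F B] [AddCommMonoid N] [Module F N]
    [Module B N] [IsScalarTower F B N] {G : Set B} (hG : Algebra.adjoin F G = ⊤)
    {W : Submodule F N} (hW : ∀ g ∈ G, ∀ x ∈ W, g • x ∈ W) (b : B) {x : N} (hx : x ∈ W) :
    b • x ∈ W := by
  have hb : b ∈ Algebra.adjoin F G := hG ▸ Algebra.mem_top
  induction hb using Algebra.adjoin_induction generalizing x with
  | mem g hg => exact hW g hg x hx
  | algebraMap r => simpa only [algebraMap_smul] using W.smul_mem r hx
  | add b c _ _ hb hc => simpa only [add_smul] using W.add_mem (hb hx) (hc hx)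
  | mul b c _ _ hb hc => simpa only [mul_smul] using hb (hc hx)

variable [Ring B] [Algebra F B] [AddCommGroup N] [Module F N] [Module B N] [IsScalarTower F B N]
  [IsSimpleModule B N]

theorem eq_bot_or_eq_top_of_adjoin_eq_top {G : Set B} (hG : Algebra.adjoin F G = ⊤)
    {W : Submodule F N} (hW : ∀ g ∈ G, ∀ x ∈ W, g • x ∈ W) : W = ⊥ ∨ W = ⊤ := by
  let W' : Submodule B N :=
    { W.toAddSubmonoid with smul_mem' := fun b _ hx => smul_mem_of_adjoin_eq_top hG hW b hx }
  have hW' : W'.restrictScalars F = W := rfl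
  rw [← hW']
  exact (eq_bot_or_eq_top W').imp (fun h => by rw [h, Submodule.restrictScalars_bot])
    fun h => by rw [h, Submodule.restrictScalars_top]

theorem span_eq_top_of_adjoin_eq_top {G : Set B} (hG : Algebra.adjoin F G = ⊤) {X : Set N}
    (hX : ∀ g ∈ G, ∀ x ∈ X, g • x ∈ Submodule.span F X) {v : N} (hvX : v ∈ X) (hv : v ≠ 0) :
    Submodule.span F X = ⊤ := by
  refine (eq_bot_or_eq_top_of_adjoin_eq_top hG fun g hg x hx => ?_).resolve_left fun h =>
    hv ((Submodule.mem_bot F).1 (h ▸ Submodule.subset_span hvX))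
  have hspan : Submodule.span F X ≤ (Submodule.span F X).comap (Algebra.lsmul F F N g) :=
    Submodule.span_le.2 (hX g hg)
  exact hspan hx

theorem eq_zero_of_forall_smul_pow_smul_eq_zero {e s : B} (hgen : Algebra.adjoin F {e, s} = ⊤)
    (he : ∃ x : N, e • x ≠ 0) {x : N} (hx : ∀ k : ℕ, e • s ^ k • x = 0) : x = 0 := by
  let W : Submodule F N := ⨅ k : ℕ, LinearMap.ker (Algebra.lsmul F F N (e * s ^ k))
  have hW : ∀ y, y ∈ W ↔ ∀ k : ℕ, e • s ^ k • y = 0 := fun y => by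
    simp only [W, Submodule.mem_iInf, LinearMap.mem_ker, Algebra.lsmul_apply, mul_smul]
  have he_zero : ∀ y ∈ W, e • y = 0 := fun y hy => by
    simpa only [pow_zero, one_smul] using (hW y).1 hy 0
  have hs_mem : ∀ y ∈ W, s • y ∈ W := fun y hy => (hW _).2 fun k => by
    simpa only [pow_succ, mul_smul] using (hW y).1 hy (k + 1)
  have hbot : W = ⊥ := by
    refine (eq_bot_or_eq_top_of_adjoin_eq_top hgen ?_).resolve_right fun htop => ?_
    · rintro g (rfl | rfl) y hy
      · exact (he_zero y hy).symm ▸ W.zero_mem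
      · exact hs_mem y hy
    · obtain ⟨y, hy⟩ := he
      exact hy (he_zero y (htop ▸ Submodule.mem_top))
  exact (Submodule.mem_bot F).1 (hbot ▸ (hW x).2 hx)

end Generators

theorem exists_forall_apply_eq_smul_of_commute {F V ι : Type*} [Field F] [IsAlgClosed F]
    [AddCommGroup V] [Module F V] [FiniteDimensional F V] [Nontrivial V] {T : ι → Module.End F V}
    (hT : ∀ i j, Commute (T i) (T j)) : ∃ v ≠ 0, ∃ χ : ι → F, ∀ i, T i v = χ i • v := by
  let C := Algebra.adjoin F (Set.range T)
  have : IsMulCommutative C :=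
    Algebra.isMulCommutative_adjoin F (by rintro _ ⟨i, rfl⟩ _ ⟨j, rfl⟩; exact hT i j)
  have : IsArtinian C V := isArtinian_of_tower F inferInstance
  obtain ⟨W, hW⟩ := IsAtomic.exists_atom (Submodule C V)
  have : IsSimpleModule C W := isSimpleModule_iff_isAtom.2 hW
  have : FiniteDimensional F W :=
    FiniteDimensional.finiteDimensional_submodule (W.restrictScalars F)
  have hfinrank : Module.finrank F (W.restrictScalars F) = 1 :=
    IsSimpleModule.finrank_eq_one_of_isMulCommutative C W F
  obtain ⟨w, hw, hspan⟩ := finrank_eq_one_iff'.1 hfinrank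
  choose χ hχ using fun i : ι =>
    hspan ((⟨T i, Algebra.subset_adjoin ⟨i, rfl⟩⟩ : C) • w)
  exact ⟨w, by simpa using hw, χ, fun i => (congrArg Subtype.val (hχ i)).symm⟩

theorem exists_eq_ite_dvd_of_mul_eq_gcd_mul {M : Type*} [MulZeroClass M] [IsCancelMulZero M]
    {χ : ℕ → M} (hχ : ∀ k j, χ k * χ j = χ (k.gcd j) * χ 0) (h0 : χ 0 ≠ 0) :
    ∃ m, ∀ k, χ k = if m ∣ k then χ 0 else 0 := by
  -- Minimality with respect to divisibility also covers `m = 0`, where `χ` is supported at `0`.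
  obtain ⟨m, hm, hmin⟩ :=
    (wellFounded_dvdNotUnit (α := ℕ)).has_min {k : ℕ | χ k ≠ 0} ⟨0, h0⟩
  have hdvd : ∀ k, χ k ≠ 0 → m ∣ k := fun k hk => by
    have hgcd : χ (m.gcd k) ≠ 0 := left_ne_zero_of_mul (hχ m k ▸ mul_ne_zero hm hk)
    by_contra hmk
    exact hmin _ hgcd (dvdNotUnit_of_dvd_of_not_dvd (Nat.gcd_dvd_left m k)
      fun h => hmk (h.trans (Nat.gcd_dvd_right m k)))
  refine ⟨m, fun k => ?_⟩
  split_ifs with hk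
  · exact mul_left_cancel₀ hm (by rw [hχ, Nat.gcd_eq_left hk])
  · exact not_not.1 (mt (hdvd k) hk)

section Dimension

variable {F B N : Type*} [Field F] [Ring B] [Algebra F B] [AddCommGroup N] [Module F N]
  [Module B N] [IsScalarTower F B N]

theorem finrank_eq_one_of_forall_smul_mem_span [IsSimpleModule B N] {G : Set B}
    (hG : Algebra.adjoin F G = ⊤) {v : N} (hv : v ≠ 0)
    (hGv : ∀ g ∈ G, g • v ∈ Submodule.span F {v}) : Module.finrank F N = 1 := by
  have hspan : Submodule.span F {v} = ⊤ :=
    span_eq_top_of_adjoin_eq_top hG (by simpa using hGv) (Set.mem_singleton v) hv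
  rw [← finrank_top F N, ← hspan, finrank_span_singleton hv]

variable {e s : B}

theorem exists_smul_ne_zero_of_finrank_ne_one [IsAlgClosed F] [FiniteDimensional F N]
    [IsSimpleModule B N] (hgen : Algebra.adjoin F {e, s} = ⊤) (hdim : Module.finrank F N ≠ 1) :
    ∃ x : N, e • x ≠ 0 := by
  by_contra! he
  have : Nontrivial N := IsSimpleModule.nontrivial B N
  obtain ⟨c, hc⟩ := Module.End.exists_eigenvalue (Algebra.lsmul F F N s)
  obtain ⟨v, hv⟩ := hc.exists_hasEigenvector
  have hsv : s • v = c • v := hv.apply_eq_smul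
  refine hdim (finrank_eq_one_of_forall_smul_mem_span hgen hv.2 ?_)
  rintro g (rfl | rfl)
  · exact (he v).symm ▸ Submodule.zero_mem _
  · exact hsv ▸ Submodule.smul_mem _ _ (Submodule.mem_span_singleton_self v)

variable {v : N} {μ : F} {m : ℕ}

theorem linearIndependent_pow_smul (hv : v ≠ 0) (hμ : μ ≠ 0)
    (hact : ∀ k, e • s ^ k • v = (if m ∣ k then μ else 0) • v) :
    LinearIndependent F fun i : Fin m => s ^ (i : ℕ) • v := by
  let L : N →ₗ[F] Fin m → N :=
    LinearMap.pi fun i : Fin m => Algebra.lsmul F F N (e * s ^ (m - i : ℕ))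
  have hL : ∀ j : Fin m, L (s ^ (j : ℕ) • v) = Pi.single j (μ • v) := by
    intro j
    ext i
    have hdvd : m ∣ m - i + j ↔ i = j := by
      refine ⟨fun h => Fin.ext ?_, fun h => by rw [h, Nat.sub_add_cancel j.2.le]⟩
      have hm := Nat.eq_of_dvd_of_lt_two_mul (by omega) h (by omega)
      omega
    calc L (s ^ (j : ℕ) • v) i = e • s ^ (m - i : ℕ) • s ^ (j : ℕ) • v := mul_smul _ _ _
      _ = (if m ∣ m - i + j then μ else 0) • v := by rw [← hact, pow_add, mul_smul]
      _ = Pi.single (M := fun _ => N) j (μ • v) i := by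
          simp only [hdvd, Pi.single_apply, ite_smul, zero_smul]
  refine LinearIndependent.of_comp L ?_
  simpa only [Function.comp_def, hL] using
    Pi.linearIndependent_single_of_ne_zero (R := F) fun _ : Fin m => smul_ne_zero hμ hv

variable [IsSimpleModule B N]

theorem pow_smul_eq_self (hgen : Algebra.adjoin F {e, s} = ⊤) (hv : v ≠ 0) (hμ : μ ≠ 0)
    (hact : ∀ k, e • s ^ k • v = (if m ∣ k then μ else 0) • v) : s ^ m • v = v := by
  have hev : e • v = μ • v := by simpa using hact 0
  rw [← sub_eq_zero]
  refine eq_zero_of_forall_smul_pow_smul_eq_zero hgen ⟨v, hev ▸ smul_ne_zero hμ hv⟩ fun k => ?_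
  simp only [smul_sub, ← mul_smul (s ^ k), ← pow_add, hact, Nat.dvd_add_self_right, sub_self]

theorem span_range_pow_smul_eq_top (hgen : Algebra.adjoin F {e, s} = ⊤) (hv : v ≠ 0)
    (hμ : μ ≠ 0) (hm : 0 < m) (hact : ∀ k, e • s ^ k • v = (if m ∣ k then μ else 0) • v) :
    Submodule.span F (Set.range fun i : Fin m => s ^ (i : ℕ) • v) = ⊤ := by
  let X : Set N := Set.range fun i : Fin m => s ^ (i : ℕ) • v
  have hvX : v ∈ X := ⟨⟨0, hm⟩, by simp only [pow_zero, one_smul]⟩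
  refine span_eq_top_of_adjoin_eq_top hgen ?_ hvX hv
  rintro g (rfl | rfl) _ ⟨i, rfl⟩
  · rw [hact]
    exact Submodule.smul_mem _ _ (Submodule.subset_span hvX)
  · rw [← mul_smul, ← pow_succ']
    refine Submodule.subset_span ?_
    rcases (show (i : ℕ) + 1 ≤ m from i.2).lt_or_eq with hi | hi
    · exact ⟨⟨i + 1, hi⟩, rfl⟩
    · rwa [hi, pow_smul_eq_self hgen hv hμ hact]

theorem finrank_eq_of_smul_pow_smul_eq_ite_dvd (hgen : Algebra.adjoin F {e, s} = ⊤)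
    (hv : v ≠ 0) (hμ : μ ≠ 0) (hm : 0 < m)
    (hact : ∀ k, e • s ^ k • v = (if m ∣ k then μ else 0) • v) : Module.finrank F N = m := by
  rw [← finrank_top F N, ← span_range_pow_smul_eq_top hgen hv hμ hm hact,
    finrank_span_eq_card (linearIndependent_pow_smul hv hμ hact), Fintype.card_fin]

theorem finrank_eq_one_of_smul_pow_smul_eq_ite_eq_zero (hgen : Algebra.adjoin F {e, s} = ⊤)
    (hv : v ≠ 0) (hμ : μ ≠ 0) (hact : ∀ k : ℕ, e • s ^ k • v = (if k = 0 then μ else 0) • v) :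
    Module.finrank F N = 1 := by
  have hev : e • v = μ • v := by simpa using hact 0
  have hsv : s • v = 0 := by
    refine eq_zero_of_forall_smul_pow_smul_eq_zero hgen ⟨v, hev ▸ smul_ne_zero hμ hv⟩ fun k => ?_
    rw [← mul_smul (s ^ k), ← pow_succ, hact, if_neg k.succ_ne_zero, zero_smul]
  refine finrank_eq_one_of_forall_smul_mem_span hgen hv ?_
  rintro g (rfl | rfl)
  · exact hev ▸ Submodule.smul_mem _ _ (Submodule.mem_span_singleton_self v)
  · exact hsv ▸ Submodule.zero_mem _

end Dimension

section SizeSeparator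

/-- The product of the elements `e sⁿ e - e sᵈ e` over `0 < d < n`, which distinguishes blocks of
size `n` from all others. It is a product over a list because the factors need not commute. -/
def sizeSeparator {R : Type*} [Ring R] (e s : R) (n : ℕ) : R :=
  ((List.Ico 1 n).map fun d => e * s ^ n * e - e * s ^ d * e).prod

theorem map_sizeSeparator {R S : Type*} [Ring R] [Ring S] (f : R →+* S) (e s : R) (n : ℕ) :
    f (sizeSeparator e s n) = sizeSeparator (f e) (f s) n := by
  simp only [sizeSeparator, map_list_prod, List.map_map, Function.comp_def, map_sub, map_mul,
    map_pow]

theorem sizeSeparator_eq_zero {R : Type*} [Ring R] {e s : R} {r n : ℕ}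
    (h : ∀ k, e * s ^ k * e = if r ∣ k then e * e else 0) (hn : 2 ≤ n) (hr : r ≠ n) :
    sizeSeparator e s n = 0 := by
  refine List.prod_eq_zero (List.mem_map.2 ?_)
  by_cases hrn : r ∣ n
  · have hlt : r < n := (Nat.le_of_dvd (by omega) hrn).lt_of_ne hr
    have hpos : 0 < r := Nat.pos_of_dvd_of_pos hrn (by omega)
    exact ⟨r, List.Ico.mem.2 ⟨hpos, hlt⟩, by rw [h, h, if_pos hrn, if_pos dvd_rfl, sub_self]⟩
  · have hr1 : ¬ r ∣ 1 := fun h1 => hrn (h1.trans (one_dvd n))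
    exact ⟨1, List.Ico.mem.2 ⟨le_rfl, hn⟩, by rw [h, h, if_neg hrn, if_neg hr1, sub_self]⟩

theorem sizeSeparator_ne_zero_of_smul_pow_smul_eq_ite_dvd {F B N : Type*} [Field F] [Ring B]
    [Algebra F B] [AddCommGroup N] [Module F N] [Module B N] [IsScalarTower F B N] {e s : B}
    {v : N} {μ : F} {n : ℕ} (hv : v ≠ 0) (hμ : μ ≠ 0)
    (hact : ∀ k, e • s ^ k • v = (if n ∣ k then μ else 0) • v) : sizeSeparator e s n ≠ 0 := by
  have hev : e • v = μ • v := by simpa using hact 0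
  have hcomm : ∀ (b : B) (c : F) (x : N), b • c • x = c • b • x := smul_comm
  have hfactor : ∀ d ∈ List.Ico 1 n, (e * s ^ n * e - e * s ^ d * e) • v = (μ * μ) • v := by
    intro d hd
    obtain ⟨hd0, hdn⟩ := List.Ico.mem.1 hd
    simp only [sub_smul, mul_smul, hev, hcomm, hact, dvd_refl, if_true,
      Nat.not_dvd_of_pos_of_lt hd0 hdn, if_false, zero_smul, smul_zero, sub_zero]
  have hprod : ∃ c : F, c ≠ 0 ∧ sizeSeparator e s n • v = c • v := by
    refine List.prod_induction (fun b : B => ∃ c : F, c ≠ 0 ∧ b • v = c • v) ?_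
      ⟨1, one_ne_zero, by rw [one_smul, one_smul]⟩ ?_
    · rintro a b ⟨c, hc, ha⟩ ⟨c', hc', hb⟩
      exact ⟨c' * c, mul_ne_zero hc' hc, by rw [mul_smul, hb, hcomm, ha, mul_smul]⟩
    · exact List.forall_mem_map.2 fun d hd => ⟨μ * μ, mul_ne_zero hμ hμ, hfactor d hd⟩
  obtain ⟨c, hc, hcv⟩ := hprod
  intro h0
  rw [h0, zero_smul] at hcv
  exact smul_ne_zero hc hv hcv.symm

end SizeSeparator

/-- The relation `e sᵏ e sʲ e = e sᵍ e e`, with `g = gcd(k, j)`, between two elements of a monoid.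
It makes the elements `e sᵏ` commute after multiplication by `e` on the right. -/
def GcdRelation {R : Type*} [Monoid R] (e s : R) : Prop :=
  ∀ k j : ℕ, e * s ^ k * e * s ^ j * e = e * s ^ k.gcd j * e * e

namespace GcdRelation

theorem of_mul_pow_mul_eq_ite {R : Type*} [MonoidWithZero R] {e s : R} {n : ℕ}
    (h : ∀ k, e * s ^ k * e = if n ∣ k then e * e else 0) : GcdRelation e s := by
  intro k j
  by_cases hk : n ∣ k
  · calc e * s ^ k * e * s ^ j * e = e * (e * s ^ j * e) := by
          rw [h k, if_pos hk]; simp only [mul_assoc]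
      _ = e * s ^ k.gcd j * e * e := by
          simp only [h, Nat.dvd_gcd_iff, hk, true_and, mul_ite, ite_mul, mul_zero, zero_mul,
            mul_assoc]
  · simp only [h, Nat.dvd_gcd_iff, hk, false_and, if_false, zero_mul]

theorem pi {ι : Type*} {R : ι → Type*} [∀ i, Monoid (R i)] {e s : ∀ i, R i}
    (h : ∀ i, GcdRelation (e i) (s i)) : GcdRelation e s :=
  fun k j => funext fun i => h i k j

variable {F B N : Type*} [Field F] [Ring B] [Algebra F B] [AddCommGroup N] [Module F N]
  [Module B N] [IsScalarTower F B N] {e s : B}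

theorem exists_smul_pow_smul_eq_smul [IsAlgClosed F] [FiniteDimensional F N]
    (h : GcdRelation e s) (he : ∃ x : N, e • x ≠ 0) :
    ∃ u : N, e • u ≠ 0 ∧ ∃ χ : ℕ → F, ∀ k, e • s ^ k • e • u = χ k • e • u := by
  let V : Submodule F N := LinearMap.range (Algebra.lsmul F F N e)
  let T : ℕ → Module.End F V := fun k =>
    (Algebra.lsmul F F N (e * s ^ k)).restrict fun x _ => ⟨s ^ k • x, (mul_smul e (s ^ k) x).symm⟩
  have hT : ∀ i j, Commute (T i) (T j) := by
    intro i j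
    refine LinearMap.ext ?_
    rintro ⟨_, u, rfl⟩
    refine Subtype.ext ?_
    have hij : e * s ^ i * e * s ^ j * e = e * s ^ j * e * s ^ i * e := by
      rw [h, h, Nat.gcd_comm]
    change (e * s ^ i) • (e * s ^ j) • e • u = (e * s ^ j) • (e * s ^ i) • e • u
    simpa only [mul_smul] using congrArg (· • u) hij
  obtain ⟨x, hx⟩ := he
  have : Nontrivial V := ⟨⟨e • x, x, rfl⟩, 0, fun h0 => hx (congrArg Subtype.val h0)⟩
  obtain ⟨⟨_, u, rfl⟩, hu, χ, hχ⟩ := exists_forall_apply_eq_smul_of_commute hT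
  refine ⟨u, fun h0 => hu (Subtype.ext h0), χ, fun k => ?_⟩
  rw [← mul_smul]
  exact congrArg Subtype.val (hχ k)

theorem mul_eq_gcd_mul (h : GcdRelation e s) {u : N} (hu : e • u ≠ 0) {χ : ℕ → F}
    (hχ : ∀ k, e • s ^ k • e • u = χ k • e • u) (k j : ℕ) :
    χ k * χ j = χ (k.gcd j) * χ 0 := by
  have h0 : e • e • u = χ 0 • e • u := by simpa only [pow_zero, one_smul] using hχ 0
  have hkj : e • s ^ k • e • s ^ j • e • u = e • s ^ k.gcd j • e • e • u := by
    simpa only [mul_smul] using congrArg (· • u) (h k j)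
  have hcomm : ∀ (b : B) (c : F) (x : N), b • c • x = c • b • x := smul_comm
  have hsmul : (χ j * χ k) • e • u = (χ 0 * χ (k.gcd j)) • e • u := by
    simpa only [h0, hχ, hcomm, mul_smul] using hkj
  rw [mul_comm (χ k), mul_comm (χ (k.gcd j))]
  exact smul_left_injective F hu hsmul

variable [IsAlgClosed F] [FiniteDimensional F N] [IsSimpleModule B N]

theorem exists_smul_pow_smul_eq_ite_dvd (h : GcdRelation e s)
    (hgen : Algebra.adjoin F {e, s} = ⊤) (he : ∃ x : N, e • x ≠ 0) :
    ∃ v : N, v ≠ 0 ∧ ∃ μ : F, μ ≠ 0 ∧ ∃ m : ℕ,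
      ∀ k, e • s ^ k • v = (if m ∣ k then μ else 0) • v := by
  obtain ⟨u, hu, χ, hχ⟩ := h.exists_smul_pow_smul_eq_smul (F := F) he
  have hmul := h.mul_eq_gcd_mul hu hχ
  have hχ0 : χ 0 ≠ 0 := by
    intro h0
    have hχ_zero : ∀ k, χ k = 0 := fun k => by
      simpa only [h0, mul_zero, mul_self_eq_zero] using hmul k k
    refine hu (eq_zero_of_forall_smul_pow_smul_eq_zero hgen he fun k => ?_)
    rw [hχ, hχ_zero, zero_smul]
  obtain ⟨m, hm⟩ := exists_eq_ite_dvd_of_mul_eq_gcd_mul hmul hχ0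
  exact ⟨e • u, hu, χ 0, hχ0, m, fun k => by rw [hχ, hm]⟩

theorem exists_smul_pow_smul_eq_ite_finrank_dvd (h : GcdRelation e s)
    (hgen : Algebra.adjoin F {e, s} = ⊤) (hdim : Module.finrank F N ≠ 1) :
    ∃ v : N, v ≠ 0 ∧ ∃ μ : F, μ ≠ 0 ∧
      ∀ k, e • s ^ k • v = (if Module.finrank F N ∣ k then μ else 0) • v := by
  have he : ∃ x : N, e • x ≠ 0 := exists_smul_ne_zero_of_finrank_ne_one hgen hdim
  obtain ⟨v, hv, μ, hμ, m, hact⟩ := h.exists_smul_pow_smul_eq_ite_dvd hgen he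
  rcases m.eq_zero_or_pos with rfl | hm
  · simp only [zero_dvd_iff] at hact
    exact absurd (finrank_eq_one_of_smul_pow_smul_eq_ite_eq_zero hgen hv hμ hact) hdim
  · refine ⟨v, hv, μ, hμ, ?_⟩
    rwa [finrank_eq_of_smul_pow_smul_eq_ite_dvd hgen hv hμ hm hact]

end GcdRelation

section Matrices

variable (R : Type*)

theorem cycMat_pow_apply [Semiring R] {n : ℕ} (k : ℕ) (i j : Fin n) :
    (cycMat R n ^ k) i j = if (j : ℕ) = (i + k) % n then 1 else 0 := by
  induction k generalizing i with
  | zero => simp [Matrix.one_apply, Nat.mod_eq_of_lt i.2, Fin.ext_iff, eq_comm]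
  | succ k ih =>
    rw [pow_succ', Matrix.mul_apply, Finset.sum_eq_single ⟨(i + 1) % n, Nat.mod_lt _ i.pos⟩]
    · rw [ih]
      simp [cycMat, add_assoc, add_comm 1 k]
    · intro l _ hl
      rw [cycMat, Matrix.of_apply, if_neg (fun h => hl (Fin.ext h)), zero_mul]
    · simp

theorem e11_succ [Semiring R] (n : ℕ) : e11 R (n + 1) = Matrix.single 0 0 1 := by
  ext i j
  simp only [e11, Matrix.of_apply, Matrix.single_apply, Fin.ext_iff, Fin.val_zero, eq_comm]

theorem e11_mul_cycMat_pow_mul_e11 [Semiring R] (n k : ℕ) :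
    e11 R n * cycMat R n ^ k * e11 R n = if n ∣ k then e11 R n else 0 := by
  rcases n with _ | n
  · exact Subsingleton.elim _ _
  · rw [e11_succ, Matrix.single_mul_mul_single, cycMat_pow_apply]
    simp only [Fin.val_zero, zero_add, Nat.dvd_iff_mod_eq_zero, eq_comm (a := 0), one_mul, mul_one]
    split_ifs
    · rfl
    · exact Matrix.single_zero 0 0

variable {R}

theorem smul_e11_mul_cycMat_pow_mul_smul_e11 [CommSemiring R] (c : R) (n k : ℕ) :
    (c • e11 R n) * cycMat R n ^ k * (c • e11 R n) =
      if n ∣ k then (c • e11 R n) * (c • e11 R n) else 0 := by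
  have he : e11 R n * e11 R n = e11 R n := by
    simpa only [pow_zero, mul_one, dvd_zero, if_true] using e11_mul_cycMat_pow_mul_e11 R n 0
  simp only [Matrix.smul_mul, Matrix.mul_smul, e11_mul_cycMat_pow_mul_e11, he, smul_ite, smul_zero]

end Matrices

theorem stmt_3_general {F ι : Type*} [Field F] [IsAlgClosed F] {R : ι → Type*}
    [∀ i, Ring (R i)] [∀ i, Algebra F (R i)] {e s : ∀ i, R i} {size : ι → ℕ}
    (h : ∀ i k, e i * s i ^ k * e i = if size i ∣ k then e i * e i else 0)
    (N : Type*) [AddCommGroup N] [Module F N] [Module (Algebra.adjoin F {e, s}) N]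
    [IsScalarTower F (Algebra.adjoin F {e, s}) N] [IsSimpleModule (Algebra.adjoin F {e, s}) N]
    (hdim : 2 ≤ Module.finrank F N) : ∃ i, size i = Module.finrank F N := by
  have : FiniteDimensional F N := Module.finite_of_finrank_pos (by omega)
  let B := Algebra.adjoin F {e, s}
  let e' : B := ⟨e, Algebra.subset_adjoin (by simp)⟩
  let s' : B := ⟨s, Algebra.subset_adjoin (by simp)⟩
  have hgen : Algebra.adjoin F {e', s'} = ⊤ := by
    convert Algebra.adjoin_adjoin_coe_preimage (R := F) (s := {e, s})
    ext b
    simp [e', s', Subtype.ext_iff]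
  have hgcd : GcdRelation e' s' := fun k j =>
    Subtype.ext (GcdRelation.pi (fun i => .of_mul_pow_mul_eq_ite (h i)) k j)
  obtain ⟨v, hv, μ, hμ, hact⟩ :=
    hgcd.exists_smul_pow_smul_eq_ite_finrank_dvd (N := N) hgen (by omega)
  by_contra! hsize
  refine sizeSeparator_ne_zero_of_smul_pow_smul_eq_ite_dvd hv hμ hact
    (Subtype.ext (funext fun i => ?_))
  exact (map_sizeSeparator ((Pi.evalRingHom R i).comp B.val.toRingHom) e' s' _).trans
    (sizeSeparator_eq_zero (h i) hdim (hsize i))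

set_option maxHeartbeats 1000000 in
set_option synthInstance.maxHeartbeats 200000 in
/-- For every `n ≥ 2` outside the support of `(a_n)` (i.e. with `a n = 0`), the algebra
`B = F⟨e,σ⟩` has no simple left `B`-module of `F`-dimension `n`. -/
theorem stmt_3 (F : Type*) [Field F] [IsAlgClosed F] (a : ℕ → ℕ) (lam : Idx a → F)
    (hlam_ne : ∀ p, lam p ≠ 0)
    (hlam : ∀ p q : Idx a, p.1.1 = q.1.1 → p ≠ q → lam p ≠ lam q ∧ lam p ≠ -lam q)
    (n : ℕ) (hn : 2 ≤ n) (hnS : a n = 0)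
    (N : Type u) [AddCommGroup N] [Module F N] [Module (↥(ConstrB F a lam)) N]
    [IsScalarTower F (↥(ConstrB F a lam)) N]
    (hsimple : IsSimpleModule (↥(ConstrB F a lam)) N) :
    Module.finrank F N ≠ n := by
  rintro rfl
  obtain ⟨p, hp⟩ := stmt_3_general (e := elemE a lam) (s := elemS F a)
    (fun p k => smul_e11_mul_cycMat_pow_mul_smul_e11 (lam p) p.1.1 k) N hn
  exact Nat.ne_zero_of_lt p.2.2 (hp ▸ hnS)
end
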